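/- For every real τ with 0 < τ < R, the series Σ_{k₀≥0} |B_{k₀}| · τ^{r(k₀+1)/d} converges. In particular, the regularized FJRW I-function I^{(W,G),reg}(τ) = Σ_{k₀≥0} B_{k₀} τ^{r(k₀+1)/d} converges absolutely on (0, R), so it has a positive finite radius of convergence at least R. -/

import Mathlib

/-!
The coefficients `B k` satisfy a first-order recurrence of step `d`: replacing `k` by `k + d`
moves every Gamma argument by an integer and leaves the fractional parts unchanged, so the
functional equation of `Γ` gives `B (k + d) = ρ k * B k` with `ρ` a quotient of Pochhammer symbols.
Numerator and denominator of `ρ` have the same degree `∑ c j = d + r` in `k`, and comparing leading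
terms yields `|ρ k| → R⁻ʳ`. As `τ ^ (r (k + 1) / d)` gains the factor `τ ^ r` over `d` steps, the
ratio test along each residue class modulo `d` applies when `τ < R`. Since coefficients
may vanish, the test is used in the multiplicative form, without dividing by `B k`.
-/

open Filter Topology Finset

section RatioTest

theorem summable_of_residue_classes {M : Type*} [AddCommMonoid M] [TopologicalSpace M]
    [ContinuousAdd M] {d : ℕ} (hd : 0 < d) {u : ℕ → M}
    (h : ∀ i < d, Summable fun k => u (i + d * k)) : Summable u := by
  have h_class : ∀ i ∈ range d, HasSum (fun n : Set.range (fun k => i + d * k) => u n)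
      (∑' k, u (i + d * k)) := fun i hi =>
    ((strictMono_mul_left_of_pos hd).const_add i).injective.hasSum_range_iff.2
      (h i (mem_range.1 hi)).hasSum
  have h_disjoint : (range d : Set ℕ).Pairwise
      (Function.onFun Disjoint fun i => Set.range fun k => i + d * k) := by
    intro i hi j hj hij
    refine Set.disjoint_left.2 ?_
    rintro _ ⟨k, rfl⟩ ⟨l, hl⟩
    have h_mod : (j + d * l) % d = (i + d * k) % d := congrArg (· % d) hl
    simp only [Nat.add_mul_mod_self_left, Nat.mod_eq_of_lt (mem_range.1 hi),
      Nat.mod_eq_of_lt (mem_range.1 hj)] at h_mod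
    exact hij h_mod.symm
  have h_cover : ⋃ i ∈ range d, Set.range (fun k => i + d * k) = Set.univ :=
    Set.eq_univ_of_forall fun n => Set.mem_biUnion (mem_range.2 (n.mod_lt hd))
      ⟨n / d, n.mod_add_div d⟩
  have h_union := hasSum_sum_disjoint (range d) h_disjoint h_class
  rw [h_cover, Function.comp_def] at h_union
  exact ((Equiv.Set.univ ℕ).hasSum_iff.1 h_union).summable

theorem summable_of_norm_add_eventually_le {E : Type*} [SeminormedAddCommGroup E]
    [CompleteSpace E] {d : ℕ} (hd : 0 < d) {u : ℕ → E} {l : ℝ} (hl : l < 1)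
    (h : ∀ᶠ k in atTop, ‖u (k + d)‖ ≤ l * ‖u k‖) : Summable u := by
  refine summable_of_residue_classes hd fun i _ => summable_of_ratio_norm_eventually_le hl ?_
  have h_class : Tendsto (fun k => i + d * k) atTop atTop :=
    ((strictMono_mul_left_of_pos hd).const_add i).tendsto_atTop
  filter_upwards [h_class.eventually h] with k hk
  simpa only [mul_add, mul_one, add_assoc] using hk

theorem summable_of_add_eq_smul_of_tendsto {𝕜 E : Type*} [NormedField 𝕜]
    [SeminormedAddCommGroup E] [NormedSpace 𝕜 E] [CompleteSpace E] {d : ℕ} (hd : 0 < d)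
    {u : ℕ → E} {ρ : ℕ → 𝕜} {l : ℝ} (hl : l < 1) (h : ∀ k, u (k + d) = ρ k • u k)
    (hρ : Tendsto (fun k => ‖ρ k‖) atTop (𝓝 l)) : Summable u := by
  obtain ⟨l', hll', hl'⟩ := exists_between hl
  refine summable_of_norm_add_eventually_le hd hl' ?_
  filter_upwards [hρ.eventually_le_const hll'] with k hk
  rw [h, norm_smul]
  exact mul_le_mul_of_nonneg_right hk (norm_nonneg _)

end RatioTest

section GammaPochhammer

-- Inverting `Γ` makes the functional equation hold at the poles too, where `Real.Gamma` is `0`.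
theorem inv_Gamma_eq_mul_inv_Gamma_add_one (y : ℝ) :
    (Real.Gamma y)⁻¹ = y * (Real.Gamma (y + 1))⁻¹ := by
  obtain rfl | hy := eq_or_ne y 0
  · simp
  · rw [Real.Gamma_add_one hy, mul_inv, mul_inv_cancel_left₀ hy]

theorem inv_Gamma_eq_ascPochhammer_mul (y : ℝ) (n : ℕ) :
    (Real.Gamma y)⁻¹ = (ascPochhammer ℝ n).eval y * (Real.Gamma (y + n))⁻¹ := by
  induction n with
  | zero => simp
  | succ n ih =>
    rw [ih, ascPochhammer_succ_eval, inv_Gamma_eq_mul_inv_Gamma_add_one (y + n), mul_assoc,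
      Nat.cast_succ, add_assoc y]

theorem ascPochhammer_eval_one_sub_add {A : Type*} [CommRing A] (x : A) (n : ℕ) :
    (ascPochhammer A n).eval (1 - (x + n)) = (-1) ^ n * (ascPochhammer A n).eval x := by
  rw [← neg_neg x, ascPochhammer_eval_neg_eq_descPochhammer, ← mul_assoc, ← mul_pow,
    descPochhammer_eval_eq_ascPochhammer]
  simp only [neg_neg, mul_neg, mul_one, one_pow, one_mul]
  congr 1
  ring

theorem Gamma_one_sub_fract_div_Gamma_one_sub_add_natCast (x : ℝ) (n : ℕ) :
    Real.Gamma (1 - Int.fract (x + n)) / Real.Gamma (1 - (x + n)) =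
      (-1) ^ n * (ascPochhammer ℝ n).eval x *
        (Real.Gamma (1 - Int.fract x) / Real.Gamma (1 - x)) := by
  rw [Int.fract_add_natCast, div_eq_mul_inv, inv_Gamma_eq_ascPochhammer_mul (1 - (x + n)) n,
    ascPochhammer_eval_one_sub_add, sub_add_eq_sub_sub, sub_add_cancel]
  ring

theorem tendsto_ascPochhammer_eval_div_pow {α : Type*} {F : Filter α} {g : α → ℝ}
    (hg : Tendsto g F atTop) (a b : ℝ) (n : ℕ) :
    Tendsto (fun x => (ascPochhammer ℝ n).eval (g x * a + b) / g x ^ n) F (𝓝 (a ^ n)) := by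
  have h_factor (i : ℕ) : Tendsto (fun x => (g x * a + b + i) / g x) F (𝓝 a) := by
    have h_inv : Tendsto (fun x => a + (b + i) / g x) F (𝓝 (a + 0)) :=
      (hg.const_div_atTop (b + i)).const_add a
    rw [add_zero] at h_inv
    refine h_inv.congr' ?_
    filter_upwards [hg.eventually_ne_atTop 0] with x hx
    field_simp
    ring
  induction n with
  | zero => simpa using tendsto_const_nhds
  | succ n ih =>
    simpa only [ascPochhammer_succ_eval, pow_succ, mul_div_mul_comm] using ih.mul (h_factor n)

end GammaPochhammer

section IFunction

variable {ι : Type*} [Fintype ι]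

/-- The coefficient `B_k` of `τ ^ (r (k + 1) / d)` in the regularized FJRW `I`-function with
weights `q_j = c j / d` and multiplicities `m j`. As `Real.Gamma` is `0` at its poles and
`x / 0 = 0`, the coefficients of non-narrow sectors vanish. -/
noncomputable def regularizedICoeff (c : ι → ℕ) (d r : ℕ) (m : ι → ℝ) (k : ℕ) : ℝ :=
  ((-1 : ℝ) ^ (k + 1) /
      (Real.Gamma (1 + ((r : ℝ) / (d : ℝ)) * ((k : ℝ) + 1)) * (k.factorial : ℝ))) *
    ∏ j, Real.Gamma (1 - Int.fract (((k : ℝ) + 1) * ((c j : ℝ) / (d : ℝ)) + m j)) /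
      Real.Gamma (1 - ((k : ℝ) + 1) * ((c j : ℝ) / (d : ℝ)) - m j)

/-- The number `R = (r ^ r * d ^ d * ∏ c_j ^ (-c_j)) ^ (1 / r)`, a lower bound for the
radius of convergence of the regularized FJRW `I`-function. -/
noncomputable def regularizedIRadius (c : ι → ℕ) (d r : ℕ) : ℝ :=
  ((r : ℝ) ^ (r : ℝ) * (d : ℝ) ^ (d : ℝ) * ∏ j, (c j : ℝ) ^ (-(c j : ℝ))) ^ ((1 : ℝ) / (r : ℝ))

/-- The factor by which `regularizedICoeff` changes from index `k` to index `k + d`. -/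
noncomputable def regularizedICoeffRatio (c : ι → ℕ) (d r : ℕ) (m : ι → ℝ) (k : ℕ) : ℝ :=
  (-1) ^ (d + ∑ j, c j) * ((∏ j, (ascPochhammer ℝ (c j)).eval (((k : ℝ) + 1) * (c j / d) + m j)) /
    ((ascPochhammer ℝ r).eval (((k : ℝ) + 1) * (r / d) + 1) *
      (ascPochhammer ℝ d).eval ((k : ℝ) + 1)))

variable {c : ι → ℕ} {d r : ℕ}

theorem inv_Gamma_one_add_mul_add (hd : 0 < d) (r k : ℕ) :
    (Real.Gamma (1 + (r : ℝ) / d * (((k + d : ℕ) : ℝ) + 1)))⁻¹ =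
      ((ascPochhammer ℝ r).eval (((k : ℝ) + 1) * (r / d) + 1))⁻¹ *
        (Real.Gamma (1 + (r : ℝ) / d * ((k : ℝ) + 1)))⁻¹ := by
  have h_pos : 0 < (ascPochhammer ℝ r).eval (((k : ℝ) + 1) * (r / d) + 1) :=
    ascPochhammer_pos _ _ (by positivity)
  have h_arg : 1 + (r : ℝ) / d * (((k + d : ℕ) : ℝ) + 1) =
      ((k : ℝ) + 1) * (r / d) + 1 + r := by
    push_cast
    field_simp
    ring
  rw [h_arg, add_comm 1 (_ * _), mul_comm ((r : ℝ) / d),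
    inv_Gamma_eq_ascPochhammer_mul (_ * _ + 1) r, inv_mul_cancel_left₀ h_pos.ne']

theorem inv_factorial_add (k d : ℕ) :
    (((k + d).factorial : ℝ))⁻¹ =
      ((ascPochhammer ℝ d).eval ((k : ℝ) + 1))⁻¹ * (k.factorial : ℝ)⁻¹ := by
  rw [← Nat.factorial_mul_ascFactorial, Nat.cast_mul, mul_inv_rev, Nat.cast_ascFactorial,
    Nat.cast_succ]

theorem prod_Gamma_one_sub_fract_div_add (hd : 0 < d) (c : ι → ℕ) (m : ι → ℝ) (k : ℕ) :
    ∏ j, Real.Gamma (1 - Int.fract ((((k + d : ℕ) : ℝ) + 1) * ((c j : ℝ) / d) + m j)) /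
        Real.Gamma (1 - (((k + d : ℕ) : ℝ) + 1) * ((c j : ℝ) / d) - m j) =
      (-1) ^ (∑ j, c j) * (∏ j, (ascPochhammer ℝ (c j)).eval (((k : ℝ) + 1) * (c j / d) + m j)) *
        ∏ j, Real.Gamma (1 - Int.fract (((k : ℝ) + 1) * ((c j : ℝ) / d) + m j)) /
          Real.Gamma (1 - ((k : ℝ) + 1) * ((c j : ℝ) / d) - m j) := by
  rw [← prod_pow_eq_pow_sum, ← prod_mul_distrib, ← prod_mul_distrib]
  refine prod_congr rfl fun j _ => ?_
  have h_arg : (((k + d : ℕ) : ℝ) + 1) * ((c j : ℝ) / d) + m j =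
      ((k : ℝ) + 1) * (c j / d) + m j + c j := by
    push_cast
    field_simp
    ring
  rw [sub_sub, sub_sub, h_arg, Gamma_one_sub_fract_div_Gamma_one_sub_add_natCast]

theorem regularizedICoeff_add (hd : 0 < d) (c : ι → ℕ) (r : ℕ) (m : ι → ℝ) (k : ℕ) :
    regularizedICoeff c d r m (k + d) =
      regularizedICoeffRatio c d r m k * regularizedICoeff c d r m k := by
  simp only [regularizedICoeff, regularizedICoeffRatio]
  rw [prod_Gamma_one_sub_fract_div_add hd, div_eq_mul_inv, mul_inv,
    inv_Gamma_one_add_mul_add hd, inv_factorial_add]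
  ring

theorem tendsto_abs_regularizedICoeffRatio (hd : 0 < d) (hr : 0 < r)
    (hrsum : ∑ j, c j = d + r) (m : ι → ℝ) :
    Tendsto (fun k => |regularizedICoeffRatio c d r m k|) atTop
      (𝓝 ((∏ j, ((c j : ℝ) / d) ^ c j) / ((r : ℝ) / d) ^ r)) := by
  have hg : Tendsto (fun k : ℕ => (k : ℝ) + 1) atTop atTop :=
    tendsto_atTop_add_const_right _ _ tendsto_natCast_atTop_atTop
  have h_num := tendsto_finsetProd univ fun j _ =>
    tendsto_ascPochhammer_eval_div_pow hg (c j / d) (m j) (c j)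
  have h_den := (tendsto_ascPochhammer_eval_div_pow hg (r / d) 1 r).mul
    (tendsto_ascPochhammer_eval_div_pow hg 1 0 d)
  have h_lim := (h_num.div h_den (by positivity)).abs
  rw [one_pow, mul_one, abs_of_nonneg (by positivity)] at h_lim
  refine h_lim.congr fun k => ?_
  have h_pow : ((k : ℝ) + 1) ^ (d + r) ≠ 0 := by positivity
  simp only [regularizedICoeffRatio, abs_mul, abs_neg_one_pow, one_mul, Pi.div_apply, mul_one,
    add_zero, prod_div_distrib, prod_pow_eq_pow_sum, hrsum]
  rw [div_mul_div_comm, ← pow_add, add_comm r d, div_div_div_cancel_right₀ h_pow]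

theorem regularizedIRadius_pow (hr : 0 < r) (c : ι → ℕ) (d : ℕ) :
    regularizedIRadius c d r ^ r = (r : ℝ) ^ r * (d : ℝ) ^ d / ∏ j, (c j : ℝ) ^ c j := by
  rw [regularizedIRadius, one_div, Real.rpow_inv_natCast_pow (by positivity) hr.ne']
  simp only [Real.rpow_natCast, Real.rpow_neg (Nat.cast_nonneg _), prod_inv_distrib,
    div_eq_mul_inv]

theorem prod_div_pow_div_eq_inv_regularizedIRadius_pow (hd : 0 < d) (hr : 0 < r)
    (hrsum : ∑ j, c j = d + r) :
    (∏ j, ((c j : ℝ) / d) ^ c j) / ((r : ℝ) / d) ^ r = (regularizedIRadius c d r ^ r)⁻¹ := by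
  simp only [regularizedIRadius_pow hr, div_pow, prod_div_distrib, prod_pow_eq_pow_sum, hrsum,
    pow_add]
  field_simp

theorem rpow_mul_add_div {τ : ℝ} (hτ : 0 < τ) (hd : 0 < d) (r k : ℕ) :
    τ ^ ((r : ℝ) * (((k + d : ℕ) : ℝ) + 1) / d) =
      τ ^ r * τ ^ ((r : ℝ) * ((k : ℝ) + 1) / d) := by
  rw [← Real.rpow_natCast τ r, ← Real.rpow_add hτ]
  congr 1
  push_cast
  field_simp
  ring

theorem summable_regularizedICoeff_mul_rpow (hd : 0 < d) (hr : 0 < r)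
    (hrsum : ∑ j, c j = d + r) (m : ι → ℝ) {τ : ℝ} (hτ0 : 0 < τ)
    (hτR : τ < regularizedIRadius c d r) :
    Summable fun k : ℕ => regularizedICoeff c d r m k * τ ^ ((r : ℝ) * ((k : ℝ) + 1) / d) := by
  have h_lt : τ ^ r * (regularizedIRadius c d r ^ r)⁻¹ < 1 := by
    rw [← div_eq_mul_inv, ← div_pow]
    have hR : 0 < regularizedIRadius c d r := hτ0.trans hτR
    exact pow_lt_one₀ (by positivity) ((div_lt_one hR).2 hτR) hr.ne'
  refine summable_of_add_eq_smul_of_tendsto hd h_lt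
    (ρ := fun k => τ ^ r * regularizedICoeffRatio c d r m k) (fun k => ?_) ?_
  · rw [regularizedICoeff_add hd, rpow_mul_add_div hτ0 hd, smul_eq_mul]
    ring
  · simp only [Real.norm_eq_abs, abs_mul, abs_of_pos (pow_pos hτ0 r)]
    rw [← prod_div_pow_div_eq_inv_regularizedIRadius_pow hd hr hrsum]
    exact (tendsto_abs_regularizedICoeffRatio hd hr hrsum m).const_mul _

theorem stmt_16_general (hd : 0 < d) (hr : 0 < r) (hrsum : ∑ j, c j = d + r) (m : ι → ℝ)
    {τ : ℝ} (hτ0 : 0 < τ) (hτR : τ < regularizedIRadius c d r) :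
    Summable (fun k : ℕ => |regularizedICoeff c d r m k| * τ ^ ((r : ℝ) * ((k : ℝ) + 1) / d)) ∧
    Summable fun k : ℕ => |regularizedICoeff c d r m k * τ ^ ((r : ℝ) * ((k : ℝ) + 1) / d)| := by
  have h_abs := (summable_regularizedICoeff_mul_rpow hd hr hrsum m hτ0 hτR).abs
  refine ⟨h_abs.congr fun k => ?_, h_abs⟩
  rw [abs_mul, abs_of_pos (Real.rpow_pos_of_pos hτ0 _)]

end IFunction

/-- Setup: `N ≥ 1`, positive integers `c_j ∣ d`, `r = Σ c_j − d > 0`,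
integers `0 ≤ f_j < d/c_j` with multiplicities `m_j = f_j·c_j/d`.  With (Mathlib's `Γ`
vanishing at the nonpositive integers and division by `0` giving `0`, encoding the vanishing
at non-narrow sectors)
`B_{k₀} = [(−1)^{k₀+1}/(Γ(1+(r/d)(k₀+1))·k₀!)]·∏_j Γ(1−⟨(k₀+1)q_j+m_j⟩)/Γ(1−(k₀+1)q_j−m_j)`
and `R = (r^r·d^d·∏_j c_j^{−c_j})^{1/r}`, for every `0 < τ < R` the series
`Σ_{k₀≥0} |B_{k₀}|·τ^{r(k₀+1)/d}` converges; in particular the regularized FJRW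
`I`-function `I^{(W,G),reg}(τ) = Σ_{k₀} B_{k₀} τ^{r(k₀+1)/d}` converges absolutely on
`(0, R)`. -/
theorem stmt_16 (N : ℕ) (hN : 1 ≤ N) (c : Fin N → ℕ) (d r : ℕ)
    (hc : ∀ j, 0 < c j) (hd : 0 < d) (hdvd : ∀ j, c j ∣ d)
    (hr : 0 < r) (hrsum : (∑ j, c j) = d + r)
    (f : Fin N → ℕ) (hf : ∀ j, f j < d / c j)
    (m : Fin N → ℝ) (hm : ∀ j, m j = (f j : ℝ) * (c j : ℝ) / (d : ℝ))
    (B : ℕ → ℝ)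
    (hB : ∀ k₀ : ℕ, B k₀ =
      ((-1 : ℝ) ^ (k₀ + 1) /
          (Real.Gamma (1 + ((r : ℝ) / (d : ℝ)) * ((k₀ : ℝ) + 1)) * (k₀.factorial : ℝ))) *
        ∏ j, Real.Gamma (1 -
              Int.fract (((k₀ : ℝ) + 1) * ((c j : ℝ) / (d : ℝ)) + m j)) /
          Real.Gamma (1 - ((k₀ : ℝ) + 1) * ((c j : ℝ) / (d : ℝ)) - m j))
    (R : ℝ)
    (hR : R = ((r : ℝ) ^ (r : ℝ) * (d : ℝ) ^ (d : ℝ) *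
      ∏ j, (c j : ℝ) ^ (-(c j : ℝ))) ^ ((1 : ℝ) / (r : ℝ)))
    (τ : ℝ) (hτ0 : 0 < τ) (hτR : τ < R) :
    Summable (fun k₀ : ℕ => |B k₀| * τ ^ ((r : ℝ) * ((k₀ : ℝ) + 1) / (d : ℝ))) ∧
    Summable (fun k₀ : ℕ => |B k₀ * τ ^ ((r : ℝ) * ((k₀ : ℝ) + 1) / (d : ℝ))|) := by
  obtain rfl : B = regularizedICoeff c d r m := funext hB
  exact stmt_16_general hd hr hrsum m hτ0 (hτR.trans_eq hR)
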